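/- Let f : ℝⁿ → ℝ ∪ {+∞} be standard self-concordant on its open convex effective domain with ∇²f(x) positive definite for all x ∈ dom f, g : ℝⁿ → ℝ ∪ {+∞} proper, lower semicontinuous and convex, and t > 0. Let x*_t be the unique minimizer of F(·;t) := f + t⁻¹g, let x_t ∈ dom f ∩ dom g, set λ_t := ‖x_t − x*_t‖_{x*_t}, and assume 0 ≤ λ_t < 1 − √2/2. Let x̄⁺_t be the exact minimizer of the model F̂(·; t, x_t) and let x⁺_t ∈ dom f ∩ dom g be a δ-solution of this subproblem for some δ ≥ 0; set λ⁺_t := ‖x⁺_t − x*_t‖_{x*_t}. Then λ⁺_t ≤ δ/(1 − λ_t) + ((3 − 2λ_t)/(1 − 4λ_t + 2λ_t²))·λ_t². -/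

import Mathlib

open RealInnerProductSpace

/-- The local norm `‖u‖_x = (uᵀ ∇²f(x) u)^(1/2)`, where `H` stands for the Hessian `∇²f(x)`. -/
noncomputable def locNorm {n : ℕ}
    (H : EuclideanSpace ℝ (Fin n) →L[ℝ] EuclideanSpace ℝ (Fin n))
    (u : EuclideanSpace ℝ (Fin n)) : ℝ :=
  Real.sqrt ⟪u, H u⟫

/-- `f` is standard self-concordant on `s`: along every line, `|φ'''(τ)| ≤ 2 φ''(τ)^(3/2)`. -/
def StandardSelfConcordantOn {n : ℕ} (f : EuclideanSpace ℝ (Fin n) → ℝ)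
    (s : Set (EuclideanSpace ℝ (Fin n))) : Prop :=
  ∀ x ∈ s, ∀ v : EuclideanSpace ℝ (Fin n), ∀ τ : ℝ, x + τ • v ∈ s →
    |iteratedDeriv 3 (fun r : ℝ => f (x + r • v)) τ| ≤
      2 * (iteratedDeriv 2 (fun r : ℝ => f (x + r • v)) τ) ^ ((3 : ℝ) / 2)

/-!
Polarizing `|D³f(x)[v,v,v]| ≤ 2 ‖v‖_x³` costs no constant: the linear part of a binary cubic form at
the angle `3θ` is a convex combination of values of the form at the angles `θ` and `θ ± 2π/3`,
whence `|D³f(x)[u,u,v]| ≤ 2 ‖u‖_x² ‖v‖_x`. Integrating this along the segment from `x*` to `x_t`,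
with `λ = ‖x_t - x*‖_{x*}`, bounds `‖·‖_{x_t}` below by `(1 - λ) ‖·‖_{x*}` and the linearization
error of `∇f` in the dual norm of `‖·‖_{x*}` by `λ² / (1 - λ)²`. The variational inequalities at the
minimizers `x*` of `f + g` (with `t⁻¹` absorbed into `g`) and `x̄` of the model, each tested at the
other point, then give `‖x̄ - x*‖_{x*} ≤ λ² / (1 - λ)⁴`, while strong convexity of the model gives
`‖x⁺ - x̄‖_{x*} ≤ δ / (1 - λ)`.
-/

/-! ### Polarization of cubic forms -/

/-- The binary cubic form with the given coefficients, normalized by binomial factors so that they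
are the values of the associated symmetric trilinear form on basis vectors. -/
def binaryCubic (A B C D x y : ℝ) : ℝ :=
  A * x ^ 3 + 3 * B * x ^ 2 * y + 3 * C * x * y ^ 2 + D * y ^ 3

theorem exists_trisection {a b : ℝ} (hab : a ^ 2 + b ^ 2 = 1) :
    ∃ c s : ℝ, c ^ 2 + s ^ 2 = 1 ∧ a = 4 * c ^ 3 - 3 * c ∧ b = 3 * s - 4 * s ^ 3 := by
  have hnorm : ‖(⟨a, b⟩ : ℂ)‖ = 1 := by
    rw [Complex.norm_def, Complex.normSq_mk, Real.sqrt_eq_one]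
    linarith
  set α := Complex.arg ⟨a, b⟩
  have hcos : Real.cos α = a := by simpa [hnorm] using Complex.norm_mul_cos_arg ⟨a, b⟩
  have hsin : Real.sin α = b := by simpa [hnorm] using Complex.norm_mul_sin_arg ⟨a, b⟩
  refine ⟨Real.cos (α / 3), Real.sin (α / 3), Real.cos_sq_add_sin_sq _, ?_, ?_⟩
  · rw [← Real.cos_three_mul, mul_div_cancel₀ α three_ne_zero, hcos]
  · rw [← Real.sin_three_mul, mul_div_cancel₀ α three_ne_zero, hsin]

-- With `(c, s) = (cos θ, sin θ)` and `r = √3`, the nodes are the angles `θ` and `θ ± 2π/3`.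
theorem binaryCubic_quadrature (A B C D : ℝ) {c s r : ℝ} (hcs : c ^ 2 + s ^ 2 = 1)
    (hr : r ^ 2 = 3) :
    A * (4 * c ^ 3 - 3 * c) + B * (3 * s - 4 * s ^ 3) =
      ((4 * c ^ 2 - 1) / 3) ^ 2 * binaryCubic A B C D c s +
      ((4 * ((-c - r * s) / 2) ^ 2 - 1) / 3) ^ 2 *
        binaryCubic A B C D ((-c - r * s) / 2) ((r * c - s) / 2) +
      ((4 * ((-c + r * s) / 2) ^ 2 - 1) / 3) ^ 2 *
        binaryCubic A B C D ((-c + r * s) / 2) ((-r * c - s) / 2) := by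
  unfold binaryCubic
  grind

theorem sum_quadrature_weights {c s r : ℝ} (hcs : c ^ 2 + s ^ 2 = 1) (hr : r ^ 2 = 3) :
    ((4 * c ^ 2 - 1) / 3) ^ 2 + ((4 * ((-c - r * s) / 2) ^ 2 - 1) / 3) ^ 2 +
      ((4 * ((-c + r * s) / 2) ^ 2 - 1) / 3) ^ 2 = 1 := by
  grind

theorem linear_part_le_of_binaryCubic_le {A B C D M a b : ℝ}
    (hM : ∀ x y : ℝ, x ^ 2 + y ^ 2 = 1 → binaryCubic A B C D x y ≤ M)
    (hab : a ^ 2 + b ^ 2 = 1) : A * a + B * b ≤ M := by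
  obtain ⟨c, s, hcs, rfl, rfl⟩ := exists_trisection hab
  obtain ⟨r, hr⟩ : ∃ r : ℝ, r ^ 2 = 3 := ⟨√3, Real.sq_sqrt (by norm_num)⟩
  have hplus : ((-c - r * s) / 2) ^ 2 + ((r * c - s) / 2) ^ 2 = 1 := by
    linear_combination (r ^ 2 + 1) / 4 * hcs + hr / 4
  have hminus : ((-c + r * s) / 2) ^ 2 + ((-r * c - s) / 2) ^ 2 = 1 := by
    linear_combination (r ^ 2 + 1) / 4 * hcs + hr / 4
  have hle {x y : ℝ} (hxy : x ^ 2 + y ^ 2 = 1) (w : ℝ) :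
      w ^ 2 * binaryCubic A B C D x y ≤ w ^ 2 * M :=
    mul_le_mul_of_nonneg_left (hM x y hxy) (sq_nonneg w)
  refine (binaryCubic_quadrature A B C D hcs hr).trans_le ?_
  refine (add_le_add (add_le_add (hle hcs _) (hle hplus _)) (hle hminus _)).trans_eq ?_
  rw [← add_mul, ← add_mul, sum_quadrature_weights hcs hr, one_mul]

section TrilinearForms

variable {E : Type*} [NormedAddCommGroup E] [NormedSpace ℝ E]
  {Q : E →L[ℝ] E →L[ℝ] ℝ} {T : E →L[ℝ] E →L[ℝ] E →L[ℝ] ℝ}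

theorem exists_unit_smul_eq (hpos : ∀ u, u ≠ 0 → 0 < Q u u) {u : E} (hu : u ≠ 0) :
    ∃ e, Q e e = 1 ∧ u = √(Q u u) • e := by
  have hroot : 0 < √(Q u u) := Real.sqrt_pos.2 (hpos u hu)
  refine ⟨(√(Q u u))⁻¹ • u, ?_, (smul_inv_smul₀ hroot.ne' u).symm⟩
  simp only [map_smul, smul_apply, smul_eq_mul]
  rw [← mul_assoc, ← mul_inv, Real.mul_self_sqrt (hpos u hu).le, inv_mul_cancel₀ (hpos u hu).ne']

theorem exists_orthogonal_decomposition (hsym : ∀ u v, Q u v = Q v u)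
    (hpos : ∀ u, u ≠ 0 → 0 < Q u u) {u v : E} (hu : Q u u = 1) (hv : Q v v = 1) :
    ∃ (a b : ℝ) (w : E), a ^ 2 + b ^ 2 = 1 ∧ Q u w = 0 ∧ Q w w ≤ 1 ∧ v = a • u + b • w := by
  set z := v - Q u v • u with hz
  have hzz : Q z z = 1 - Q u v ^ 2 := by
    simp only [hz, map_sub, map_smul, sub_apply, smul_apply, smul_eq_mul, hsym v u, hu, hv]
    ring
  have huz : Q u z = 0 := by simp [hz, hu]
  by_cases hz0 : z = 0
  · have hquv : Q u v ^ 2 = 1 := by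
      rw [hz0, map_zero] at hzz
      linarith
    exact ⟨Q u v, 0, 0, by simp [hquv], by simp, by simp,
      by simpa using sub_eq_zero.1 (hz.symm.trans hz0)⟩
  · obtain ⟨w, hw, hzw⟩ := exists_unit_smul_eq hpos hz0
    have hroot : √(Q z z) ≠ 0 := (Real.sqrt_pos.2 (hpos z hz0)).ne'
    refine ⟨Q u v, √(Q z z), w, ?_, ?_, hw.le, ?_⟩
    · rw [Real.sq_sqrt (hpos z hz0).le, hzz]
      ring
    · rw [hzw, map_smul, smul_eq_mul] at huz
      exact (mul_eq_zero.1 huz).resolve_left hroot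
    · rw [← hzw, hz, add_sub_cancel]

theorem trilinear_apply_eq_binaryCubic (hleft : ∀ u v w, T u v w = T v u w)
    (hright : ∀ u v w, T u v w = T u w v) (u w : E) (x y : ℝ) :
    T (x • u + y • w) (x • u + y • w) (x • u + y • w) =
      binaryCubic (T u u u) (T u u w) (T u w w) (T w w w) x y := by
  simp only [map_add, map_smul, add_apply, smul_apply, smul_eq_mul, binaryCubic]
  rw [hleft w u u, hright u w u, hleft w u w, hright w w u, hleft w u w]
  ring

theorem trilinear_le_of_unit {c : ℝ} (hc : 0 ≤ c) (hsym : ∀ u v, Q u v = Q v u)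
    (hpos : ∀ u, u ≠ 0 → 0 < Q u u) (hleft : ∀ u v w, T u v w = T v u w)
    (hright : ∀ u v w, T u v w = T u w v) (hT : ∀ x, |T x x x| ≤ c * √(Q x x) ^ 3)
    {u v : E} (hu : Q u u = 1) (hv : Q v v = 1) : T u u v ≤ c := by
  obtain ⟨a, b, w, hab, huw, hw, rfl⟩ := exists_orthogonal_decomposition hsym hpos hu hv
  suffices T u u u * a + T u u w * b ≤ c by
    simpa only [map_add, map_smul, smul_eq_mul, mul_comm] using this
  refine linear_part_le_of_binaryCubic_le (C := T u w w) (D := T w w w) (fun x y hxy => ?_) hab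
  have hle : Q (x • u + y • w) (x • u + y • w) ≤ 1 := by
    simp only [map_add, map_smul, add_apply, smul_apply, smul_eq_mul, hsym w u, huw, hu]
    nlinarith [sq_nonneg y]
  calc binaryCubic (T u u u) (T u u w) (T u w w) (T w w w) x y
      = T (x • u + y • w) (x • u + y • w) (x • u + y • w) :=
        (trilinear_apply_eq_binaryCubic hleft hright u w x y).symm
    _ ≤ c * √(Q (x • u + y • w) (x • u + y • w)) ^ 3 := (le_abs_self _).trans (hT _)
    _ ≤ c := mul_le_of_le_one_right hc
        (pow_le_one₀ (Real.sqrt_nonneg _) (Real.sqrt_le_one.2 hle))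

theorem abs_trilinear_le {c : ℝ} (hc : 0 ≤ c) (hsym : ∀ u v, Q u v = Q v u)
    (hpos : ∀ u, u ≠ 0 → 0 < Q u u) (hleft : ∀ u v w, T u v w = T v u w)
    (hright : ∀ u v w, T u v w = T u w v) (hT : ∀ x, |T x x x| ≤ c * √(Q x x) ^ 3) (u v : E) :
    |T u u v| ≤ c * √(Q u u) ^ 2 * √(Q v v) := by
  rcases eq_or_ne u 0 with rfl | hu0
  · simp
  rcases eq_or_ne v 0 with rfl | hv0
  · simp
  obtain ⟨e, he, hue⟩ := exists_unit_smul_eq hpos hu0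
  obtain ⟨k, hk, hvk⟩ := exists_unit_smul_eq hpos hv0
  have hunit : |T e e k| ≤ c := by
    refine abs_le'.2 ⟨trilinear_le_of_unit hc hsym hpos hleft hright hT he hk, ?_⟩
    rw [← map_neg]
    exact trilinear_le_of_unit hc hsym hpos hleft hright hT he (by simpa using hk)
  have hscale : T u u v = √(Q u u) ^ 2 * √(Q v v) * T e e k := by
    conv_lhs => rw [hue, hvk]
    simp only [map_smul, smul_apply, smul_eq_mul]
    ring
  calc |T u u v| = √(Q u u) ^ 2 * √(Q v v) * |T e e k| := by
        rw [hscale, abs_mul, abs_of_nonneg (by positivity)]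
    _ ≤ √(Q u u) ^ 2 * √(Q v v) * c := by gcongr
    _ = c * √(Q u u) ^ 2 * √(Q v v) := by ring

end TrilinearForms

/-! ### Derivatives along lines -/

section Lines

variable {E F : Type*} [NormedAddCommGroup E] [NormedSpace ℝ E]
  [NormedAddCommGroup F] [NormedSpace ℝ F] {f : E → ℝ} {x d : E} {τ : ℝ}

/-- The Hessian of `f` as a bilinear form. Its derivative `fderiv ℝ (hessForm f)` is the third
derivative of `f`, with the direction of differentiation as first argument. -/
noncomputable abbrev hessForm (f : E → ℝ) : E → E →L[ℝ] E →L[ℝ] ℝ :=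
  fderiv ℝ (fderiv ℝ f)

theorem hessForm_comm (hf : ContDiffAt ℝ 2 f x) (u v : E) :
    hessForm f x u v = hessForm f x v u :=
  hf.isSymmSndFDerivAt (by simp) u v

theorem hasDerivAt_line (x d : E) (τ : ℝ) : HasDerivAt (fun r : ℝ => x + r • d) d τ := by
  simpa using ((hasDerivAt_id τ).smul_const d).const_add x

theorem hasDerivAt_comp_line {G : E → F} (hG : DifferentiableAt ℝ G (x + τ • d)) :
    HasDerivAt (fun r : ℝ => G (x + r • d)) (fderiv ℝ G (x + τ • d) d) τ :=
  hG.hasFDerivAt.comp_hasDerivAt τ (hasDerivAt_line x d τ)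

theorem hasDerivAt_clm_apply_const {L : ℝ → E →L[ℝ] F} {L' : E →L[ℝ] F} (hL : HasDerivAt L L' τ)
    (u : E) : HasDerivAt (fun r => L r u) (L' u) τ := by
  simpa using hL.clm_apply (hasDerivAt_const τ u)

theorem hasDerivAt_fderiv_line (hf : ContDiffAt ℝ 2 f (x + τ • d)) (u : E) :
    HasDerivAt (fun r : ℝ => fderiv ℝ f (x + r • d) u) (hessForm f (x + τ • d) d u) τ := by
  have hdiff : DifferentiableAt ℝ (fderiv ℝ f) (x + τ • d) :=
    (hf.fderiv_right (m := 1) (by norm_num)).differentiableAt one_ne_zero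
  exact hasDerivAt_clm_apply_const (hasDerivAt_comp_line hdiff) u

theorem hasDerivAt_hessForm_line (hf : ContDiffAt ℝ 3 f (x + τ • d)) (u v : E) :
    HasDerivAt (fun r : ℝ => hessForm f (x + r • d) u v)
      (fderiv ℝ (hessForm f) (x + τ • d) d u v) τ := by
  have hdiff : DifferentiableAt ℝ (hessForm f) (x + τ • d) :=
    ((hf.fderiv_right (m := 2) (by norm_num)).fderiv_right (m := 1)
      (by norm_num)).differentiableAt one_ne_zero
  have hline : HasDerivAt (fun r : ℝ => hessForm f (x + r • d))
      (fderiv ℝ (hessForm f) (x + τ • d) d) τ :=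
    hasDerivAt_comp_line (F := E →L[ℝ] E →L[ℝ] ℝ) hdiff
  exact hasDerivAt_clm_apply_const
    (hasDerivAt_clm_apply_const (F := E →L[ℝ] ℝ) hline u) v

theorem eventually_contDiffAt_line {n : ℕ} (hf : ContDiffAt ℝ n f (x + τ • d)) :
    ∀ᶠ r in nhds τ, ContDiffAt ℝ n f (x + r • d) :=
  (hasDerivAt_line x d τ).continuousAt.eventually (hf.eventually (by simp))

theorem iteratedDeriv_two_line (hf : ContDiffAt ℝ 2 f (x + τ • d)) :
    iteratedDeriv 2 (fun r : ℝ => f (x + r • d)) τ = hessForm f (x + τ • d) d d := by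
  have hfst : deriv (fun r : ℝ => f (x + r • d)) =ᶠ[nhds τ] fun r => fderiv ℝ f (x + r • d) d := by
    filter_upwards [eventually_contDiffAt_line hf] with r hr
    exact (hasDerivAt_comp_line (hr.differentiableAt two_ne_zero)).deriv
  rw [iteratedDeriv_succ, iteratedDeriv_one, hfst.deriv_eq]
  exact (hasDerivAt_fderiv_line hf d).deriv

theorem iteratedDeriv_three_line (hf : ContDiffAt ℝ 3 f (x + τ • d)) :
    iteratedDeriv 3 (fun r : ℝ => f (x + r • d)) τ =
      fderiv ℝ (hessForm f) (x + τ • d) d d d := by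
  have hsnd : iteratedDeriv 2 (fun r : ℝ => f (x + r • d)) =ᶠ[nhds τ]
      fun r => hessForm f (x + r • d) d d := by
    filter_upwards [eventually_contDiffAt_line hf] with r hr
    exact iteratedDeriv_two_line (hr.of_le (by norm_num))
  rw [iteratedDeriv_succ, hsnd.deriv_eq]
  exact (hasDerivAt_hessForm_line hf d d).deriv

theorem fderiv_hessForm_comm_left (hf : ContDiffAt ℝ 3 f x) (u v w : E) :
    fderiv ℝ (hessForm f) x u v w = fderiv ℝ (hessForm f) x v u w := by
  have hfderiv : ContDiffAt ℝ 2 (fderiv ℝ f) x := hf.fderiv_right (by norm_num)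
  exact congrArg (· w) (hfderiv.isSymmSndFDerivAt (by simp) u v)

theorem fderiv_hessForm_comm_right (hf : ContDiffAt ℝ 3 f x) (u v w : E) :
    fderiv ℝ (hessForm f) x u v w = fderiv ℝ (hessForm f) x u w v := by
  have hf₀ : ContDiffAt ℝ 3 f (x + (0 : ℝ) • u) := by simpa using hf
  have hcomm : (fun r : ℝ => hessForm f (x + r • u) v w) =ᶠ[nhds 0]
      fun r => hessForm f (x + r • u) w v := by
    filter_upwards [eventually_contDiffAt_line hf₀] with r hr
    exact hessForm_comm (hr.of_le (by norm_num)) v w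
  simpa using (hasDerivAt_hessForm_line hf₀ v w).unique
    ((hasDerivAt_hessForm_line hf₀ w v).congr_of_eventuallyEq hcomm)

end Lines

/-! ### Differential inequalities on the unit interval -/

section UnitInterval

open Set

variable {q q' : ℝ → ℝ} {r : ℝ}

theorem monotoneOn_Icc_of_hasDerivAt_nonneg {a b : ℝ} (hq : ∀ s ∈ Icc a b, HasDerivAt q (q' s) s)
    (hq' : ∀ s ∈ Icc a b, 0 ≤ q' s) : MonotoneOn q (Icc a b) :=
  monotoneOn_of_hasDerivWithinAt_nonneg (convex_Icc a b)
    (fun s hs => (hq s hs).continuousAt.continuousWithinAt)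
    (fun s hs => (hq s (interior_subset hs)).hasDerivWithinAt)
    (fun s hs => hq' s (interior_subset hs))

theorem one_sub_mul_pos (hr : r < 1) {s : ℝ} (hs : s ∈ Icc (0 : ℝ) 1) : 0 < 1 - r * s := by
  rcases hs.1.eq_or_lt with rfl | hs₀
  · simp
  · linarith [mul_pos hs₀ (sub_pos.2 hr), hs.2]

theorem hasDerivAt_one_sub_mul (r s : ℝ) : HasDerivAt (fun s : ℝ => 1 - r * s) (-r) s := by
  simpa using ((hasDerivAt_id s).const_mul r).const_sub 1

theorem sqrt_le_div_one_sub_mul (hpos : ∀ s ∈ Icc (0 : ℝ) 1, 0 < q s)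
    (hq : ∀ s ∈ Icc (0 : ℝ) 1, HasDerivAt q (q' s) s)
    (hq' : ∀ s ∈ Icc (0 : ℝ) 1, q' s ≤ 2 * √(q s) ^ 3) (hr : √(q 0) < 1)
    {s : ℝ} (hs : s ∈ Icc (0 : ℝ) 1) : √(q s) ≤ √(q 0) / (1 - √(q 0) * s) := by
  have hroot : ∀ s ∈ Icc (0 : ℝ) 1, 0 < √(q s) := fun s hs => Real.sqrt_pos.2 (hpos s hs)
  have hmono : MonotoneOn (fun s => (√(q s))⁻¹ + s) (Icc 0 1) := by
    refine monotoneOn_Icc_of_hasDerivAt_nonneg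
      (fun s hs => (((hq s hs).sqrt (hpos s hs).ne').inv (hroot s hs).ne').add (hasDerivAt_id s))
      (fun s hs => ?_)
    have hpos_root := hroot s hs
    have hle : q' s / (2 * √(q s)) / √(q s) ^ 2 ≤ 1 := by
      rw [div_div, div_le_one (by positivity)]
      linarith [hq' s hs]
    rw [neg_div]
    linarith
  have hinv : (√(q 0))⁻¹ ≤ (√(q s))⁻¹ + s := by simpa using hmono (by simp) hs hs.1
  have hroot₀ := hroot 0 (by simp)
  have hsub : (1 - √(q 0) * s) / √(q 0) = (√(q 0))⁻¹ - s := by field_simp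
  calc √(q s) = ((√(q s))⁻¹)⁻¹ := (inv_inv _).symm
    _ ≤ ((1 - √(q 0) * s) / √(q 0))⁻¹ :=
        inv_anti₀ (div_pos (one_sub_mul_pos hr hs) hroot₀)
          (hsub.trans_le (sub_le_iff_le_add.2 hinv))
    _ = √(q 0) / (1 - √(q 0) * s) := inv_div _ _

theorem one_sub_mul_sq_mul_le (hr : r < 1) (hq : ∀ s ∈ Icc (0 : ℝ) 1, HasDerivAt q (q' s) s)
    (hq' : ∀ s ∈ Icc (0 : ℝ) 1, q' s ≤ 2 * q s * (r / (1 - r * s)))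
    {s : ℝ} (hs : s ∈ Icc (0 : ℝ) 1) : (1 - r * s) ^ 2 * q s ≤ q 0 := by
  have hmono : MonotoneOn (fun s => -((1 - r * s) ^ 2 * q s)) (Icc 0 1) := by
    refine monotoneOn_Icc_of_hasDerivAt_nonneg
      (fun s hs => (((hasDerivAt_one_sub_mul r s).pow 2).mul (hq s hs)).neg) (fun s hs => ?_)
    have hden := one_sub_mul_pos hr hs
    have hbound : (1 - r * s) ^ 2 * q' s ≤ 2 * r * (1 - r * s) * q s :=
      calc (1 - r * s) ^ 2 * q' s ≤ (1 - r * s) ^ 2 * (2 * q s * (r / (1 - r * s))) := by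
            gcongr
            exact hq' s hs
        _ = 2 * r * (1 - r * s) * q s := by field_simp
    simp only [Nat.add_one_sub_one, pow_one, Nat.cast_ofNat, Pi.pow_apply]
    linarith
  simpa using hmono (by simp) hs hs.1

theorem one_sub_mul_sq_mul_le_right (hr : r < 1)
    (hq : ∀ s ∈ Icc (0 : ℝ) 1, HasDerivAt q (q' s) s)
    (hq' : ∀ s ∈ Icc (0 : ℝ) 1, -(2 * q s * (r / (1 - r * s))) ≤ q' s)
    {s : ℝ} (hs : s ∈ Icc (0 : ℝ) 1) : (1 - r * s) ^ 2 * q 0 ≤ q s := by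
  have hmono : MonotoneOn (fun s => q s / (1 - r * s) ^ 2) (Icc 0 1) := by
    refine monotoneOn_Icc_of_hasDerivAt_nonneg
      (fun s hs => (hq s hs).div ((hasDerivAt_one_sub_mul r s).pow 2)
        (pow_pos (one_sub_mul_pos hr hs) 2).ne') (fun s hs => div_nonneg ?_ (sq_nonneg _))
    have hden := one_sub_mul_pos hr hs
    have hbound : -(2 * r * (1 - r * s) * q s) ≤ (1 - r * s) ^ 2 * q' s :=
      calc -(2 * r * (1 - r * s) * q s)
          = (1 - r * s) ^ 2 * -(2 * q s * (r / (1 - r * s))) := by field_simp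
        _ ≤ (1 - r * s) ^ 2 * q' s := by
            gcongr
            exact hq' s hs
    simp only [Nat.add_one_sub_one, pow_one, Nat.cast_ofNat]
    linarith
  have hle : q 0 ≤ q s / (1 - r * s) ^ 2 := by simpa using hmono (by simp) hs hs.1
  rwa [le_div_iff₀' (pow_pos (one_sub_mul_pos hr hs) 2)] at hle

-- The left side is `∫₀¹ s q''(s) ds` for `q' = p` and `q'' = p'`.
theorem taylor_remainder_le {p p' : ℝ → ℝ} {M : ℝ} (hr : r < 1)
    (hq : ∀ s ∈ Icc (0 : ℝ) 1, HasDerivAt q (p s) s)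
    (hp : ∀ s ∈ Icc (0 : ℝ) 1, HasDerivAt p (p' s) s)
    (hp' : ∀ s ∈ Icc (0 : ℝ) 1, p' s ≤ 2 * M / (1 - r * s) ^ 3) :
    q 0 - q 1 + p 1 ≤ M / (1 - r) ^ 2 := by
  have hmono : MonotoneOn (fun s => q s - s * p s + M * (s / (1 - r * s)) ^ 2) (Icc 0 1) := by
    refine monotoneOn_Icc_of_hasDerivAt_nonneg
      (q' := fun s => s * (2 * M / (1 - r * s) ^ 3 - p' s)) (fun s hs => ?_)
      (fun s hs => mul_nonneg hs.1 (sub_nonneg.2 (hp' s hs)))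
    have hden := (one_sub_mul_pos hr hs).ne'
    have hquot := (((hasDerivAt_id s).div (hasDerivAt_one_sub_mul r s) hden).pow 2).const_mul M
    refine (((hq s hs).sub ((hasDerivAt_id s).mul (hp s hs))).add hquot).congr_deriv ?_
    simp only [Pi.div_apply, id_eq, Nat.add_one_sub_one, pow_one, Nat.cast_ofNat]
    field_simp
    ring
  have hle : q 0 ≤ q 1 - p 1 + M / (1 - r) ^ 2 := by
    simpa [div_eq_mul_inv] using hmono (by simp) (by simp) zero_le_one
  linarith

end UnitInterval

/-! ### Self-concordant functions -/

section SelfConcordance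

variable {E : Type*} [NormedAddCommGroup E] [NormedSpace ℝ E] {f : E → ℝ} {S : Set E} {x d : E}

/-- The local norm `‖u‖_x` of `f`. For a merely semidefinite Hessian it is only a seminorm, and it
has no meaning where the Hessian is indefinite, the square root of a negative number being `0`. -/
noncomputable def localNorm (f : E → ℝ) (x u : E) : ℝ :=
  √(hessForm f x u u)

theorem localNorm_nonneg (f : E → ℝ) (x u : E) : 0 ≤ localNorm f x u :=
  Real.sqrt_nonneg _

/-- Nondegenerate standard self-concordant functions on a normed space: the setting in which local
norms at different points of the domain `S` are comparable norms. -/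
structure NondegenerateSelfConcordantOn (f : E → ℝ) (S : Set E) : Prop where
  isOpen : IsOpen S
  convex : Convex ℝ S
  contDiffOn : ContDiffOn ℝ 3 f S
  abs_iteratedDeriv_three_le : ∀ x ∈ S, ∀ v : E, ∀ τ : ℝ, x + τ • v ∈ S →
    |iteratedDeriv 3 (fun r : ℝ => f (x + r • v)) τ| ≤
      2 * (iteratedDeriv 2 (fun r : ℝ => f (x + r • v)) τ) ^ ((3 : ℝ) / 2)
  hessForm_pos : ∀ x ∈ S, ∀ u, u ≠ 0 → 0 < hessForm f x u u

namespace NondegenerateSelfConcordantOn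

theorem contDiffAt (hf : NondegenerateSelfConcordantOn f S) (hx : x ∈ S) : ContDiffAt ℝ 3 f x :=
  hf.contDiffOn.contDiffAt (hf.isOpen.mem_nhds hx)

theorem contDiffAt_two (hf : NondegenerateSelfConcordantOn f S) (hx : x ∈ S) :
    ContDiffAt ℝ 2 f x :=
  (hf.contDiffAt hx).of_le (by norm_num)

theorem hessForm_nonneg (hf : NondegenerateSelfConcordantOn f S) (hx : x ∈ S) (u : E) :
    0 ≤ hessForm f x u u := by
  rcases eq_or_ne u 0 with rfl | hu
  · simp
  · exact (hf.hessForm_pos x hx u hu).le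

theorem sq_localNorm (hf : NondegenerateSelfConcordantOn f S) (hx : x ∈ S) (u : E) :
    localNorm f x u ^ 2 = hessForm f x u u :=
  Real.sq_sqrt (hf.hessForm_nonneg hx u)

theorem hessForm_le_localNorm_mul (hf : NondegenerateSelfConcordantOn f S) (hx : x ∈ S)
    (u v : E) : hessForm f x u v ≤ localNorm f x u * localNorm f x v := by
  have hcauchy : hessForm f x u v ^ 2 ≤ hessForm f x u u * hessForm f x v v :=
    (hessForm f x).toBilinForm.apply_sq_le_of_symm (hf.hessForm_nonneg hx)
      ⟨hessForm_comm (hf.contDiffAt_two hx)⟩ u v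
  rw [← hf.sq_localNorm hx, ← hf.sq_localNorm hx, ← mul_pow] at hcauchy
  exact le_of_sq_le_sq hcauchy
    (mul_nonneg (localNorm_nonneg f x u) (localNorm_nonneg f x v))

theorem localNorm_add_le (hf : NondegenerateSelfConcordantOn f S) (hx : x ∈ S) (u v : E) :
    localNorm f x (u + v) ≤ localNorm f x u + localNorm f x v := by
  refine Real.sqrt_le_iff.2 ⟨add_nonneg (localNorm_nonneg f x u) (localNorm_nonneg f x v), ?_⟩
  simp only [map_add, add_apply, hessForm_comm (hf.contDiffAt_two hx) v u]
  linarith [hf.hessForm_le_localNorm_mul hx u v, hf.sq_localNorm hx u, hf.sq_localNorm hx v]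

theorem abs_third_diagonal_le (hf : NondegenerateSelfConcordantOn f S) (hx : x ∈ S) (u : E) :
    |fderiv ℝ (hessForm f) x u u u| ≤ 2 * localNorm f x u ^ 3 := by
  have hx₀ : x + (0 : ℝ) • u ∈ S := by simpa using hx
  have hpow : hessForm f x u u ^ ((3 : ℝ) / 2) = localNorm f x u ^ 3 := by
    rw [localNorm, Real.sqrt_eq_rpow, ← Real.rpow_mul_natCast (hf.hessForm_nonneg hx u)]
    norm_num
  have hline := hf.abs_iteratedDeriv_three_le x hx u 0 hx₀
  rwa [iteratedDeriv_two_line (hf.contDiffAt_two hx₀),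
    iteratedDeriv_three_line (hf.contDiffAt hx₀), zero_smul, add_zero, hpow] at hline

theorem abs_third_le (hf : NondegenerateSelfConcordantOn f S) (hx : x ∈ S) (u v : E) :
    |fderiv ℝ (hessForm f) x u u v| ≤ 2 * localNorm f x u ^ 2 * localNorm f x v :=
  abs_trilinear_le zero_le_two (hessForm_comm (hf.contDiffAt_two hx)) (hf.hessForm_pos x hx)
    (fderiv_hessForm_comm_left (hf.contDiffAt hx))
    (fderiv_hessForm_comm_right (hf.contDiffAt hx)) (hf.abs_third_diagonal_le hx) u v

theorem abs_fderiv_hessForm_apply_self_le (hf : NondegenerateSelfConcordantOn f S) (hx : x ∈ S)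
    (u v : E) :
    |fderiv ℝ (hessForm f) x v u u| ≤ 2 * hessForm f x u u * localNorm f x v := by
  rw [fderiv_hessForm_comm_left (hf.contDiffAt hx) v u u,
    fderiv_hessForm_comm_right (hf.contDiffAt hx) u v u, ← hf.sq_localNorm hx u]
  exact hf.abs_third_le hx u v

theorem localNorm_line_le (hf : NondegenerateSelfConcordantOn f S) (hx : x ∈ S)
    (hxd : x + d ∈ S) (hr : localNorm f x d < 1) {s : ℝ} (hs : s ∈ Set.Icc (0 : ℝ) 1) :
    localNorm f (x + s • d) d ≤ localNorm f x d / (1 - localNorm f x d * s) := by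
  rcases eq_or_ne d 0 with rfl | hd
  · simp [localNorm]
  have hmem {s : ℝ} (hs : s ∈ Set.Icc (0 : ℝ) 1) : x + s • d ∈ S :=
    hf.convex.add_smul_mem hx hxd hs
  simpa [localNorm] using sqrt_le_div_one_sub_mul (q := fun s => hessForm f (x + s • d) d d)
    (fun s hs => hf.hessForm_pos _ (hmem hs) d hd)
    (fun s hs => hasDerivAt_hessForm_line (hf.contDiffAt (hmem hs)) d d)
    (fun s hs => (le_abs_self _).trans (hf.abs_third_diagonal_le (hmem hs) d))
    (by simpa [localNorm] using hr) hs

theorem abs_fderiv_hessForm_line_le (hf : NondegenerateSelfConcordantOn f S) (hx : x ∈ S)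
    (hxd : x + d ∈ S) (hr : localNorm f x d < 1) (u : E) {s : ℝ} (hs : s ∈ Set.Icc (0 : ℝ) 1) :
    |fderiv ℝ (hessForm f) (x + s • d) d u u| ≤
      2 * hessForm f (x + s • d) u u * (localNorm f x d / (1 - localNorm f x d * s)) := by
  have hmem := hf.convex.add_smul_mem hx hxd hs
  refine (hf.abs_fderiv_hessForm_apply_self_le hmem u d).trans ?_
  have := hf.hessForm_nonneg hmem u
  gcongr
  exact hf.localNorm_line_le hx hxd hr hs

theorem localNorm_line_le_div (hf : NondegenerateSelfConcordantOn f S) (hx : x ∈ S)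
    (hxd : x + d ∈ S) (hr : localNorm f x d < 1) (u : E) {s : ℝ} (hs : s ∈ Set.Icc (0 : ℝ) 1) :
    localNorm f (x + s • d) u ≤ localNorm f x u / (1 - localNorm f x d * s) := by
  have hmem {s : ℝ} (hs : s ∈ Set.Icc (0 : ℝ) 1) : x + s • d ∈ S :=
    hf.convex.add_smul_mem hx hxd hs
  have hsq := one_sub_mul_sq_mul_le hr
    (fun s hs => hasDerivAt_hessForm_line (hf.contDiffAt (hmem hs)) u u)
    (fun s hs => (le_abs_self _).trans (hf.abs_fderiv_hessForm_line_le hx hxd hr u hs)) hs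
  rw [zero_smul, add_zero, ← hf.sq_localNorm (hmem hs), ← hf.sq_localNorm hx, ← mul_pow] at hsq
  rw [le_div_iff₀' (one_sub_mul_pos hr hs)]
  exact le_of_sq_le_sq hsq (localNorm_nonneg f x u)

theorem one_sub_mul_localNorm_le (hf : NondegenerateSelfConcordantOn f S) (hx : x ∈ S)
    (hxd : x + d ∈ S) (hr : localNorm f x d < 1) (u : E) :
    (1 - localNorm f x d) * localNorm f x u ≤ localNorm f (x + d) u := by
  have hmem {s : ℝ} (hs : s ∈ Set.Icc (0 : ℝ) 1) : x + s • d ∈ S :=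
    hf.convex.add_smul_mem hx hxd hs
  have hsq := one_sub_mul_sq_mul_le_right hr
    (fun s hs => hasDerivAt_hessForm_line (hf.contDiffAt (hmem hs)) u u)
    (fun s hs => neg_le_of_abs_le (hf.abs_fderiv_hessForm_line_le hx hxd hr u hs))
    (Set.right_mem_Icc.2 zero_le_one)
  rw [zero_smul, add_zero, one_smul, mul_one, ← hf.sq_localNorm hx, ← hf.sq_localNorm hxd,
    ← mul_pow] at hsq
  exact le_of_sq_le_sq hsq (localNorm_nonneg f _ u)

theorem fderiv_sub_add_hessForm_le (hf : NondegenerateSelfConcordantOn f S) (hx : x ∈ S)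
    (hxd : x + d ∈ S) (hr : localNorm f x d < 1) (e : E) :
    fderiv ℝ f x e - fderiv ℝ f (x + d) e + hessForm f (x + d) d e ≤
      localNorm f x d ^ 2 * localNorm f x e / (1 - localNorm f x d) ^ 2 := by
  have hmem {s : ℝ} (hs : s ∈ Set.Icc (0 : ℝ) 1) : x + s • d ∈ S :=
    hf.convex.add_smul_mem hx hxd hs
  have hthird : ∀ s ∈ Set.Icc (0 : ℝ) 1, fderiv ℝ (hessForm f) (x + s • d) d d e ≤
      2 * (localNorm f x d ^ 2 * localNorm f x e) / (1 - localNorm f x d * s) ^ 3 := by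
    intro s hs
    set r := localNorm f x d
    set N := localNorm f x e
    have hden := one_sub_mul_pos hr hs
    have hd₀ := localNorm_nonneg f (x + s • d) d
    have he₀ := localNorm_nonneg f (x + s • d) e
    calc fderiv ℝ (hessForm f) (x + s • d) d d e
        ≤ 2 * localNorm f (x + s • d) d ^ 2 * localNorm f (x + s • d) e :=
          (le_abs_self _).trans (hf.abs_third_le (hmem hs) d e)
      _ ≤ 2 * (r / (1 - r * s)) ^ 2 * (N / (1 - r * s)) := by
          gcongr
          · exact hf.localNorm_line_le hx hxd hr hs
          · exact hf.localNorm_line_le_div hx hxd hr e hs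
      _ = 2 * (r ^ 2 * N) / (1 - r * s) ^ 3 := by field_simp
  simpa using taylor_remainder_le hr
    (fun s hs => hasDerivAt_fderiv_line (hf.contDiffAt_two (hmem hs)) e)
    (fun s hs => hasDerivAt_hessForm_line (hf.contDiffAt (hmem hs)) d e) hthird

end NondegenerateSelfConcordantOn

end SelfConcordance

/-! ### Composite minimization and the quadratic model -/

section CompositeModel

variable {E : Type*} [NormedAddCommGroup E] [NormedSpace ℝ E] {f g φ : E → ℝ} {S C : Set E}

theorem sub_le_fderiv_of_isLocalMinOn_add {φ' : E →L[ℝ] ℝ} {x y : E} (hφ : HasFDerivAt φ φ' x)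
    (hg : ConvexOn ℝ C g) (hx : x ∈ C) (hmin : IsLocalMinOn (fun z => φ z + g z) C x)
    (hy : y ∈ C) : g x - g y ≤ φ' (y - x) := by
  set F : ℝ → ℝ := fun r => φ (x + r • (y - x)) + r * (g y - g x)
  have hline : Filter.Tendsto (fun r : ℝ => x + r • (y - x)) (nhdsWithin 0 (Set.Icc 0 1))
      (nhdsWithin x C) := by
    refine tendsto_nhdsWithin_iff.2 ⟨?_, ?_⟩
    · simpa using (hasDerivAt_line x (y - x) 0).continuousAt.continuousWithinAt.tendsto
    · filter_upwards [self_mem_nhdsWithin] with r hr using hg.1.add_smul_sub_mem hx hy hr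
  have hFmin : IsLocalMinOn F (Set.Icc 0 1) 0 := by
    filter_upwards [hline.eventually hmin, self_mem_nhdsWithin] with r hr hr01
    have hconv := hg.2 hx hy (sub_nonneg.2 hr01.2) hr01.1 (sub_add_cancel 1 r)
    rw [show (1 - r) • x + r • y = x + r • (y - x) by module] at hconv
    simp only [smul_eq_mul] at hconv
    simp only [F, zero_smul, add_zero, zero_mul]
    linarith
  have hφ₀ : HasFDerivAt φ φ' (x + (0 : ℝ) • (y - x)) := by simpa using hφ
  have hFderiv : HasDerivAt F (φ' (y - x) + (g y - g x)) 0 := by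
    have hslope : HasDerivAt (fun r : ℝ => r * (g y - g x)) (g y - g x) 0 := by
      simpa using (hasDerivAt_id (0 : ℝ)).mul_const (g y - g x)
    exact (hφ₀.comp_hasDerivAt 0 (hasDerivAt_line x (y - x) 0)).add hslope
  have hdir : (1 : ℝ) ∈ posTangentConeAt (Set.Icc (0 : ℝ) 1) 0 :=
    mem_posTangentConeAt_of_segment_subset (by simp [segment_eq_Icc])
  have hnonneg : 0 ≤ φ' (y - x) + (g y - g x) := by
    simpa using hFmin.hasFDerivWithinAt_nonneg hFderiv.hasFDerivAt.hasFDerivWithinAt hdir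
  linarith

/-- The second-order Taylor model of `f` around `x`: the smooth part of the objective of the
proximal-Newton subproblem. -/
noncomputable def quadModel (f : E → ℝ) (x y : E) : ℝ :=
  f x + fderiv ℝ f x (y - x) + 1 / 2 * hessForm f x (y - x) (y - x)

theorem quadModel_eq_add {x : E} (hf : ContDiffAt ℝ 2 f x) (y z : E) :
    quadModel f x z = quadModel f x y + (fderiv ℝ f x + hessForm f x (y - x)) (z - y) +
      1 / 2 * hessForm f x (z - y) (z - y) := by
  have hcomm := hessForm_comm hf (z - y) (y - x)
  have hsplit : z - x = (y - x) + (z - y) := by abel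
  simp only [quadModel, hsplit, map_add, add_apply, hcomm]
  ring

theorem hasFDerivAt_quadModel {x : E} (hf : ContDiffAt ℝ 2 f x) (y : E) :
    HasFDerivAt (quadModel f x) (fderiv ℝ f x + hessForm f x (y - x)) y := by
  have hsub : HasFDerivAt (fun z : E => z - x) (ContinuousLinearMap.id ℝ E) y :=
    (hasFDerivAt_id y).sub_const x
  have hquad := ((hessForm f x).hasFDerivAt_of_bilinear hsub hsub).const_mul (1 / 2)
  refine ((((fderiv ℝ f x).hasFDerivAt.comp y hsub).const_add (f x)).add hquad).congr_fderiv ?_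
  ext v
  have hcomm := hessForm_comm hf v (y - x)
  simp only [add_apply, smul_apply, smul_eq_mul, ContinuousLinearMap.comp_apply,
    ContinuousLinearMap.precompR_apply, ContinuousLinearMap.compL_apply,
    ContinuousLinearMap.precompL_apply, ContinuousLinearMap.id_apply, hcomm]
  ring

namespace NondegenerateSelfConcordantOn

theorem sq_localNorm_le_of_isMinOn (hf : NondegenerateSelfConcordantOn f S)
    (hg : ConvexOn ℝ C g) {x y z : E} (hx : x ∈ S) (hy : y ∈ C)
    (hmin : IsMinOn (fun z => quadModel f x z + g z) C y) (hz : z ∈ C) :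
    localNorm f x (z - y) ^ 2 ≤
      2 * ((quadModel f x z + g z) - (quadModel f x y + g y)) := by
  have hvar := sub_le_fderiv_of_isLocalMinOn_add
    (hasFDerivAt_quadModel (hf.contDiffAt_two hx) y) hg hy hmin.localize hz
  rw [hf.sq_localNorm hx, quadModel_eq_add (hf.contDiffAt_two hx) y z]
  linarith

theorem localNorm_sub_le_of_isMinOn (hf : NondegenerateSelfConcordantOn f S)
    (hg : ConvexOn ℝ C g) {x d y : E} (hx : x ∈ S ∩ C)
    (hmin : IsMinOn (fun z => f z + g z) (S ∩ C) x) (hxd : x + d ∈ S)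
    (hr : localNorm f x d < 1) (hy : y ∈ C)
    (hymin : IsMinOn (fun z => quadModel f (x + d) z + g z) C y) :
    localNorm f x (y - x) ≤ localNorm f x d ^ 2 / (1 - localNorm f x d) ^ 4 := by
  set e := y - x with he
  set r := localNorm f x d
  have hpos : 0 < 1 - r := sub_pos.2 hr
  have hlocal : IsLocalMinOn (fun z => f z + g z) C x := by
    have := hmin.localize
    rwa [IsLocalMinOn, IsMinFilter, nhdsWithin_inter_of_mem
      (mem_nhdsWithin_of_mem_nhds (hf.isOpen.mem_nhds hx.1))] at this
  have hvarx : g x - g y ≤ fderiv ℝ f x e := sub_le_fderiv_of_isLocalMinOn_add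
    ((hf.contDiffAt hx.1).differentiableAt three_ne_zero).hasFDerivAt hg hx.2 hlocal hy
  have hvary : g y - g x ≤ (fderiv ℝ f (x + d) + hessForm f (x + d) (e - d)) (-e) := by
    have hvar := sub_le_fderiv_of_isLocalMinOn_add
      (hasFDerivAt_quadModel (hf.contDiffAt_two hxd) y) hg hy hymin.localize hx.2
    rwa [show y - (x + d) = e - d by rw [he]; abel, show x - y = -e by rw [he]; abel] at hvar
  have hcombined : hessForm f (x + d) e e ≤
      fderiv ℝ f x e - fderiv ℝ f (x + d) e + hessForm f (x + d) d e := by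
    simp only [map_neg, map_sub, add_apply, sub_apply] at hvary
    linarith
  have hsq : ((1 - r) * localNorm f x e) ^ 2 ≤ r ^ 2 * localNorm f x e / (1 - r) ^ 2 :=
    calc ((1 - r) * localNorm f x e) ^ 2 ≤ localNorm f (x + d) e ^ 2 := by
          have := localNorm_nonneg f x e
          gcongr
          exact hf.one_sub_mul_localNorm_le hx.1 hxd hr e
      _ = hessForm f (x + d) e e := hf.sq_localNorm hxd e
      _ ≤ r ^ 2 * localNorm f x e / (1 - r) ^ 2 :=
          hcombined.trans (hf.fderiv_sub_add_hessForm_le hx.1 hxd hr e)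
  rw [le_div_iff₀ (pow_pos hpos 2)] at hsq
  rw [le_div_iff₀ (pow_pos hpos 4)]
  rcases (localNorm_nonneg f x e).eq_or_lt with hzero | hlt
  · rw [← hzero, zero_mul]
    positivity
  · refine le_of_mul_le_mul_right ?_ hlt
    linarith

end NondegenerateSelfConcordantOn

theorem stmt5_general (hf : NondegenerateSelfConcordantOn f S) (hg : ConvexOn ℝ C g)
    {xs xt xb xp : E} (hxs : xs ∈ S ∩ C) (hmin : IsMinOn (fun x => f x + g x) (S ∩ C) xs)
    (hxt : xt ∈ S) (hlam : localNorm f xs (xt - xs) < 1)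
    (hxb : xb ∈ C) (hxb_min : IsMinOn (fun x => quadModel f xt x + g x) C xb)
    {δ : ℝ} (hδ : 0 ≤ δ) (hxp : xp ∈ C)
    (hxp_δ : (quadModel f xt xp + g xp) - (quadModel f xt xb + g xb) ≤ δ ^ 2 / 2) :
    localNorm f xs (xp - xs) ≤ δ / (1 - localNorm f xs (xt - xs)) +
      localNorm f xs (xt - xs) ^ 2 / (1 - localNorm f xs (xt - xs)) ^ 4 := by
  obtain ⟨d, rfl⟩ : ∃ d, xt = xs + d := ⟨xt - xs, by abel⟩
  rw [add_sub_cancel_left] at hlam ⊢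
  have hexact := hf.localNorm_sub_le_of_isMinOn hg hxs hmin hxt hlam hxb hxb_min
  have hmodel : localNorm f (xs + d) (xp - xb) ≤ δ := by
    have hsq := hf.sq_localNorm_le_of_isMinOn hg hxt hxb hxb_min hxp
    exact le_of_sq_le_sq (by linarith) hδ
  have hinexact : localNorm f xs (xp - xb) ≤ δ / (1 - localNorm f xs d) := by
    rw [le_div_iff₀' (sub_pos.2 hlam)]
    exact (hf.one_sub_mul_localNorm_le hxs.1 hxt hlam _).trans hmodel
  calc localNorm f xs (xp - xs) = localNorm f xs ((xp - xb) + (xb - xs)) := by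
        rw [sub_add_sub_cancel]
    _ ≤ localNorm f xs (xp - xb) + localNorm f xs (xb - xs) := hf.localNorm_add_le hxs.1 _ _
    _ ≤ _ := add_le_add hinexact hexact

end CompositeModel

/-! ### The Euclidean statement -/

theorem inner_hess_eq_hessForm {E : Type*} [NormedAddCommGroup E] [InnerProductSpace ℝ E]
    [CompleteSpace E] {f : E → ℝ} {x : E} {H : E →L[ℝ] E}
    (hH : HasFDerivAt (fun y => gradient f y) H x) (u v : E) :
    ⟪u, H v⟫ = hessForm f x v u := by
  have hfderiv : HasFDerivAt (fderiv ℝ f) (innerSL ℝ ∘L H) x := by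
    rw [← toDual_comp_gradient]
    exact (innerSL ℝ).hasFDerivAt.comp x hH
  rw [hessForm, hfderiv.fderiv, ContinuousLinearMap.comp_apply, innerSL_apply_apply,
    real_inner_comm]

theorem locNorm_eq_localNorm {n : ℕ} {f : EuclideanSpace ℝ (Fin n) → ℝ}
    {x : EuclideanSpace ℝ (Fin n)} {H : EuclideanSpace ℝ (Fin n) →L[ℝ] EuclideanSpace ℝ (Fin n)}
    (hH : HasFDerivAt (fun y => gradient f y) H x) (u : EuclideanSpace ℝ (Fin n)) :
    locNorm H u = localNorm f x u := by
  rw [locNorm, localNorm, inner_hess_eq_hessForm hH]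

theorem div_one_sub_pow_four_le {r : ℝ} (hr : r < 1 - √2 / 2) :
    r ^ 2 / (1 - r) ^ 4 ≤ (3 - 2 * r) / (1 - 4 * r + 2 * r ^ 2) * r ^ 2 := by
  have hsqrt : √(2 : ℝ) ^ 2 = 2 := Real.sq_sqrt zero_le_two
  have hpos : 0 < 1 - r := by linarith [Real.sqrt_nonneg 2]
  have hden : 0 < 1 - 4 * r + 2 * r ^ 2 := by nlinarith [Real.sqrt_nonneg 2]
  have hcoeff : 1 / (1 - r) ^ 4 ≤ (3 - 2 * r) / (1 - 4 * r + 2 * r ^ 2) := by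
    rw [div_le_div_iff₀ (by positivity) hden, ← sub_nonneg]
    calc 0 ≤ 2 * (1 - r) ^ 5 + ((1 - r) ^ 2 - 1) ^ 2 := by positivity
      _ = (3 - 2 * r) * (1 - r) ^ 4 - 1 * (1 - 4 * r + 2 * r ^ 2) := by ring
  calc r ^ 2 / (1 - r) ^ 4 = 1 / (1 - r) ^ 4 * r ^ 2 := by ring
    _ ≤ _ := by gcongr

/-- contraction estimate for one inexact full-step proximal-Newton iteration:
if `λ_t = ‖x_t − x*_t‖_{x*_t} < 1 − √2/2` and `x⁺_t` is a `δ`-solution of the subproblem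
`min F̂(·; t, x_t)` with exact solution `x̄⁺_t`, then
`λ⁺_t ≤ δ/(1 − λ_t) + ((3 − 2λ_t)/(1 − 4λ_t + 2λ_t²))·λ_t²`. -/
theorem stmt5 {n : ℕ} (f g : EuclideanSpace ℝ (Fin n) → ℝ)
    (df dg : Set (EuclideanSpace ℝ (Fin n)))
    (hdf_open : IsOpen df) (hdf_conv : Convex ℝ df)
    (hf_smooth : ContDiffOn ℝ 3 f df)
    (hf_sc : StandardSelfConcordantOn f df)
    (hess : EuclideanSpace ℝ (Fin n) →
      EuclideanSpace ℝ (Fin n) →L[ℝ] EuclideanSpace ℝ (Fin n))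
    (hhess : ∀ x ∈ df, HasFDerivAt (fun y => gradient f y) (hess x) x)
    (hpd : ∀ x ∈ df, ∀ u : EuclideanSpace ℝ (Fin n), u ≠ 0 → 0 < ⟪u, hess x u⟫)
    (hg_cvx : ConvexOn ℝ dg g) (hg_lsc : LowerSemicontinuousOn g dg)
    (hg_proper : dg.Nonempty)
    (t : ℝ) (ht : 0 < t)
    -- `x*_t` is the unique minimizer of `F(·;t) = f + t⁻¹ g`
    (xs : EuclideanSpace ℝ (Fin n)) (hxs : xs ∈ df ∩ dg)
    (hmin : ∀ x ∈ df ∩ dg, f xs + t⁻¹ * g xs ≤ f x + t⁻¹ * g x)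
    (huniq : ∀ x ∈ df ∩ dg, (∀ y ∈ df ∩ dg, f x + t⁻¹ * g x ≤ f y + t⁻¹ * g y) → x = xs)
    (xt : EuclideanSpace ℝ (Fin n)) (hxt : xt ∈ df ∩ dg)
    (lam : ℝ) (hlam_def : lam = locNorm (hess xs) (xt - xs))
    (hlam : lam < 1 - Real.sqrt 2 / 2)
    -- the composite quadratic model `F̂(·; t, x_t)` around `x_t`
    (Fhat : EuclideanSpace ℝ (Fin n) → ℝ)
    (hFhat : ∀ x, Fhat x = f xt + ⟪gradient f xt, x - xt⟫ +
      (1/2) * ⟪x - xt, hess xt (x - xt)⟫ + t⁻¹ * g x)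
    -- `x̄⁺_t` is the exact minimizer of the model
    (xb : EuclideanSpace ℝ (Fin n)) (hxb_mem : xb ∈ dg)
    (hxb_min : ∀ y ∈ dg, Fhat xb ≤ Fhat y)
    -- `x⁺_t` is a `δ`-solution of the subproblem
    (δ : ℝ) (hδ : 0 ≤ δ)
    (xp : EuclideanSpace ℝ (Fin n)) (hxp : xp ∈ df ∩ dg)
    (hxp_δ : Fhat xp - Fhat xb ≤ δ ^ 2 / 2) :
    locNorm (hess xs) (xp - xs) ≤
      δ / (1 - lam) + ((3 - 2 * lam) / (1 - 4 * lam + 2 * lam ^ 2)) * lam ^ 2 := by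
  have hhf : NondegenerateSelfConcordantOn f df := ⟨hdf_open, hdf_conv, hf_smooth, hf_sc,
    fun x hx u hu => inner_hess_eq_hessForm (hhess x hx) u u ▸ hpd x hx u hu⟩
  obtain rfl : Fhat = fun x => quadModel f xt x + t⁻¹ * g x := funext fun x => by
    rw [hFhat, quadModel, inner_gradient_left, inner_hess_eq_hessForm (hhess xt hxt.1)]
  have hlam_lt : lam < 1 := by linarith [Real.sqrt_nonneg 2]
  rw [locNorm_eq_localNorm (hhess xs hxs.1)] at hlam_def ⊢
  subst hlam_def
  exact (stmt5_general hhf (hg_cvx.smul (inv_nonneg.2 ht.le)) hxs hmin hxt.1 hlam_lt hxb_mem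
    hxb_min hδ hxp.2 hxp_δ).trans (add_le_add_right (div_one_sub_pow_four_le hlam) _)
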